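/- arXiv:math/0702563 — 6 statements merged into one kernel-verified Lean document; each statement's English description precedes it below -/
import Mathlib

section
/- Let A = (A₁, A₂) be a commuting 2-contraction on H. Then D_{A*} = (1_H − A₁A₁* − A₂A₂*)^{1/2} is injective if and only if D_A = (1_{H⊕H} − A*A)^{1/2} is injective. -/
/-!
An operator `D` is injective iff `D * D` is, so the claim compares the kernels of `1 - A A*` and
`1 - A* A`, i.e. the fixed vectors of `A A*` and `A* A`. If `1 - f g` is injective and
`x = g (f x)`, then `f x` is fixed by `f g`, so `f x = 0` and therefore `x = g (f x) = 0`.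
-/

open ContinuousLinearMap Filter

theorem injective_comp_self_iff {α : Type*} (f : α → α) :
    Function.Injective (f ∘ f) ↔ Function.Injective f :=
  ⟨fun h => h.of_comp, fun h => h.comp h⟩

section LinearMap

variable {R M N : Type*} [Semiring R] [AddCommGroup M] [Module R M] [AddCommGroup N] [Module R N]

theorem injective_one_sub_comp_swap {f : M →ₗ[R] N} {g : N →ₗ[R] M}
    (h : Function.Injective ⇑(1 - f ∘ₗ g)) : Function.Injective ⇑(1 - g ∘ₗ f) := by
  rw [injective_iff_map_eq_zero] at h ⊢
  intro x hx
  have hx_fixed : x = g (f x) := sub_eq_zero.1 hx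
  have hfx_fixed : f x = f (g (f x)) := congrArg f hx_fixed
  have hfx : f x = 0 := h (f x) (sub_eq_zero.2 hfx_fixed)
  rw [hx_fixed, hfx, map_zero]

theorem injective_one_sub_comp_comm (f : M →ₗ[R] N) (g : N →ₗ[R] M) :
    Function.Injective ⇑(1 - f ∘ₗ g) ↔ Function.Injective ⇑(1 - g ∘ₗ f) :=
  ⟨injective_one_sub_comp_swap, injective_one_sub_comp_swap⟩

end LinearMap

section RowOperator

variable {𝕜 E F G : Type*} [RCLike 𝕜]
  [NormedAddCommGroup E] [InnerProductSpace 𝕜 E]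
  [NormedAddCommGroup F] [InnerProductSpace 𝕜 F]
  [NormedAddCommGroup G] [InnerProductSpace 𝕜 G]

/-- The row operator `(x, y) ↦ A₁ x + A₂ y` of a pair of operators with a common codomain. Its
domain is the Hilbert sum `WithLp 2 (E × F)`, since `E × F` itself carries the sup norm. -/
noncomputable def rowOperator (A₁ : E →L[𝕜] G) (A₂ : F →L[𝕜] G) : WithLp 2 (E × F) →L[𝕜] G :=
  A₁.coprod A₂ ∘L (WithLp.prodContinuousLinearEquiv 2 𝕜 E F : WithLp 2 (E × F) →L[𝕜] E × F)

theorem rowOperator_apply (A₁ : E →L[𝕜] G) (A₂ : F →L[𝕜] G) (v : WithLp 2 (E × F)) :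
    rowOperator A₁ A₂ v = A₁ v.fst + A₂ v.snd :=
  rfl

variable [CompleteSpace E] [CompleteSpace F] [CompleteSpace G]

theorem adjoint_rowOperator_apply (A₁ : E →L[𝕜] G) (A₂ : F →L[𝕜] G) (z : G) :
    adjoint (rowOperator A₁ A₂) z = WithLp.toLp 2 (adjoint A₁ z, adjoint A₂ z) := by
  refine ext_inner_right 𝕜 fun v => ?_
  simp only [adjoint_inner_left, rowOperator_apply, inner_add_right, WithLp.prod_inner_apply,
    WithLp.ofLp_fst, WithLp.ofLp_snd]

theorem rowOperator_comp_adjoint (A₁ : E →L[𝕜] G) (A₂ : F →L[𝕜] G) :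
    rowOperator A₁ A₂ ∘L adjoint (rowOperator A₁ A₂) =
      A₁ ∘L adjoint A₁ + A₂ ∘L adjoint A₂ := by
  ext z
  simp only [comp_apply, add_apply, adjoint_rowOperator_apply, rowOperator_apply,
    WithLp.toLp_fst, WithLp.toLp_snd]

end RowOperator

theorem Dstar_injective_iff_DA_injective_general
    {𝕜 E F : Type*} [RCLike 𝕜]
    [NormedAddCommGroup E] [InnerProductSpace 𝕜 E] [CompleteSpace E]
    [NormedAddCommGroup F] [InnerProductSpace 𝕜 F] [CompleteSpace F]
    (A : E →L[𝕜] F)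
    (Dstar : F →L[𝕜] F) (hDstar_sq : Dstar * Dstar = 1 - A ∘L adjoint A)
    (DA : E →L[𝕜] E) (hDA_sq : DA * DA = 1 - adjoint A ∘L A) :
    Function.Injective ⇑Dstar ↔ Function.Injective ⇑DA := by
  rw [← injective_comp_self_iff Dstar, ← injective_comp_self_iff DA,
    ← FunLike.coe_mul_eq_comp, ← FunLike.coe_mul_eq_comp, hDstar_sq, hDA_sq]
  exact injective_one_sub_comp_comm (A : E →ₗ[𝕜] F) (adjoint A : F →ₗ[𝕜] E)

theorem Dstar_injective_iff_DA_injective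
    {H : Type*} [NormedAddCommGroup H] [InnerProductSpace ℂ H] [CompleteSpace H]
    (A₁ A₂ : H →L[ℂ] H)
    (hcomm : A₁ * A₂ = A₂ * A₁)
    (hcontr : A₁ * adjoint A₁ + A₂ * adjoint A₂ ≤ 1)
    (Dstar : H →L[ℂ] H) (hDstar_pos : 0 ≤ Dstar)
    (hDstar_sq : Dstar * Dstar = 1 - A₁ * adjoint A₁ - A₂ * adjoint A₂)
    (Arow : WithLp 2 (H × H) →L[ℂ] H)
    (hArow : ∀ x y : H, Arow ((WithLp.equiv 2 (H × H)).symm (x, y)) = A₁ x + A₂ y)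
    (DA : WithLp 2 (H × H) →L[ℂ] WithLp 2 (H × H)) (hDA_pos : 0 ≤ DA)
    (hDA_sq : DA * DA = 1 - (adjoint Arow) ∘L Arow) :
    Function.Injective ⇑Dstar ↔ Function.Injective ⇑DA := by
  obtain rfl : Arow = rowOperator A₁ A₂ := ContinuousLinearMap.ext fun v => hArow v.fst v.snd
  refine Dstar_injective_iff_DA_injective_general (rowOperator A₁ A₂) Dstar ?_ DA hDA_sq
  rw [hDstar_sq, rowOperator_comp_adjoint, sub_sub, mul_def, mul_def]
end

section
/- (Lemma 1.) Let A = (A₁, A₂) be a commuting 2-contraction on H such that D_{A*} is injective, let (z₁,z₂) ∈ 𝔻² and (x,y) ∈ H ⊕ H. Then A₁x + A₂y = z₁x + z₂y if and only if θ_A(z₁,z₂)(D_A(x,y)) = 0. -/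
/-!
Write `A` for the row operator, `D` and `E` for the defect operators of `A` and of its adjoint, and
`R = (1 - Z A*)⁻¹`. The intertwining relation `A D = E A` together with `D² = 1 - A* A` gives
`θ(Z) D = E (-A + R Z (1 - A* A))`. Since `R Z A* = R - 1`, the right-hand side is `E R (Z - A)`,
and both `E` and `R` are injective.
-/

open ContinuousLinearMap Filter

section Adjoint

variable {𝕜 E F G G' : Type*} [RCLike 𝕜]
  [NormedAddCommGroup E] [InnerProductSpace 𝕜 E] [CompleteSpace E]
  [NormedAddCommGroup F] [InnerProductSpace 𝕜 F] [CompleteSpace F]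
  [NormedAddCommGroup G] [InnerProductSpace 𝕜 G] [CompleteSpace G]

theorem comp_self_comp_adjoint_eq_zero_iff {T : F →L[𝕜] G} {X : E →L[𝕜] F} :
    T ∘L X ∘L adjoint X = 0 ↔ T ∘L X = 0 := by
  refine ⟨fun h => ?_, fun h => by rw [← comp_assoc, h, zero_comp]⟩
  have hTX : adjoint (adjoint (T ∘L X)) ∘L adjoint (T ∘L X) = 0 := by
    rw [adjoint_adjoint, adjoint_comp, ← comp_assoc, comp_assoc T, h, zero_comp]
  exact (map_eq_zero_iff _ adjoint.injective).1 (adjoint_comp_self_eq_zero_iff.1 hTX)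

theorem adjoint_row_apply {A : WithLp 2 (E × F) →L[𝕜] G} {A₁ : E →L[𝕜] G} {A₂ : F →L[𝕜] G}
    (hA : ∀ x y, A (WithLp.toLp 2 (x, y)) = A₁ x + A₂ y) (g : G) :
    adjoint A g = WithLp.toLp 2 (adjoint A₁ g, adjoint A₂ g) := by
  refine ext_inner_right 𝕜 fun w => ?_
  obtain ⟨⟨x, y⟩, rfl⟩ := WithLp.toLp_surjective 2 w
  simp [adjoint_inner_left, hA, inner_add_right]

theorem row_comp_adjoint_row [NormedAddCommGroup G'] [NormedSpace 𝕜 G']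
    {Z : WithLp 2 (E × F) →L[𝕜] G'} {Z₁ : E →L[𝕜] G'} {Z₂ : F →L[𝕜] G'}
    {A : WithLp 2 (E × F) →L[𝕜] G} {A₁ : E →L[𝕜] G} {A₂ : F →L[𝕜] G}
    (hZ : ∀ x y, Z (WithLp.toLp 2 (x, y)) = Z₁ x + Z₂ y)
    (hA : ∀ x y, A (WithLp.toLp 2 (x, y)) = A₁ x + A₂ y) :
    Z ∘L adjoint A = Z₁ ∘L adjoint A₁ + Z₂ ∘L adjoint A₂ := by
  ext g
  simp [adjoint_row_apply hA, hZ]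

end Adjoint

section DefectOperators

variable {H K : Type*}
  [NormedAddCommGroup H] [InnerProductSpace ℂ H] [CompleteSpace H]
  [NormedAddCommGroup K] [InnerProductSpace ℂ K] [CompleteSpace K]
  {D : K →L[ℂ] K} {E : H →L[ℂ] H}

theorem comp_eq_zero_of_comp_eq_neg_comp {X : K →L[ℂ] H} (hD : 0 ≤ D) (hE : 0 ≤ E)
    (h : E ∘L X = -(X ∘L D)) : E ∘L X = 0 := by
  have hXX : 0 ≤ X ∘L adjoint X := (nonneg_iff_isPositive _).2 (isPositive_self_comp_adjoint X)
  have hXDX : 0 ≤ X ∘L D ∘L adjoint X :=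
    (nonneg_iff_isPositive _).2 (((nonneg_iff_isPositive _).1 hD).conj_adjoint X)
  have hEXX : E * (X ∘L adjoint X) = -(X ∘L D ∘L adjoint X) := by
    rw [mul_def, ← comp_assoc, h, neg_comp, comp_assoc]
  have hcomm : Commute E (X ∘L adjoint X) := by
    rw [(IsSelfAdjoint.of_nonneg hE).commute_iff (.of_nonneg hXX), hEXX]
    exact (IsSelfAdjoint.of_nonneg hXDX).neg
  exact comp_self_comp_adjoint_eq_zero_iff.1 <|
    le_antisymm (hEXX.trans_le (neg_nonpos.2 hXDX)) (hcomm.mul_nonneg hE hXX)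

-- `X = B D - E B` satisfies `E X = -X D`, so both sides vanish; then `X* X = X* B D` and
-- `D X* = 0` force `X = 0`.
theorem comp_eq_comp_of_comp_mul_self {B : K →L[ℂ] H} (hD : 0 ≤ D) (hE : 0 ≤ E)
    (h : B ∘L (D * D) = (E * E) ∘L B) : B ∘L D = E ∘L B := by
  set X : K →L[ℂ] H := B ∘L D - E ∘L B with hX
  have hanti : E ∘L X = -(X ∘L D) := by
    simp only [hX, comp_sub, sub_comp, comp_assoc, ← mul_def, h, neg_sub]
    rw [mul_def, comp_assoc]
  have hEX : E ∘L X = 0 := comp_eq_zero_of_comp_eq_neg_comp hD hE hanti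
  have hXD : X ∘L D = 0 := neg_eq_zero.1 (hanti.symm.trans hEX)
  have hXE : adjoint X ∘L E = 0 := by
    rw [← (IsSelfAdjoint.of_nonneg hE).adjoint_eq, ← adjoint_comp, hEX, map_zero]
  have hDX : D ∘L adjoint X = 0 := by
    rw [← (IsSelfAdjoint.of_nonneg hD).adjoint_eq, ← adjoint_comp, hXD, map_zero]
  have hXX : adjoint X ∘L X = adjoint X ∘L B ∘L D := by
    rw [hX, comp_sub, ← hX, ← comp_assoc _ E, hXE, zero_comp, sub_zero]
  have hXXX : adjoint X ∘L X ∘L adjoint X = 0 := by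
    rw [← comp_assoc, hXX, comp_assoc, comp_assoc, hDX, comp_zero, comp_zero]
  exact sub_eq_zero.1 (adjoint_comp_self_eq_zero_iff.1 (comp_self_comp_adjoint_eq_zero_iff.1 hXXX))

/-- `D` is the defect operator `(1 - T* T)^{1/2}` of `T`, characterised as a positive operator with
the prescribed square; such a `D` exists exactly when `T` is a contraction. -/
structure IsDefectOperator (T : K →L[ℂ] H) (D : K →L[ℂ] K) : Prop where
  nonneg : 0 ≤ D
  mul_self : D * D = 1 - adjoint T ∘L T

variable {A Z : K →L[ℂ] H} {R : H →L[ℂ] H}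

theorem IsDefectOperator.comp_eq_comp (hD : IsDefectOperator A D)
    (hE : IsDefectOperator (adjoint A) E) : A ∘L D = E ∘L A := by
  refine comp_eq_comp_of_comp_mul_self hD.nonneg hE.nonneg ?_
  rw [hD.mul_self, hE.mul_self, adjoint_adjoint, comp_sub, sub_comp, comp_assoc, one_def, one_def,
    comp_id, id_comp]

theorem characteristicFunction_comp_defect (hD : IsDefectOperator A D)
    (hE : IsDefectOperator (adjoint A) E) (hR : R * (1 - Z ∘L adjoint A) = 1) :
    (-A + E ∘L R ∘L Z ∘L D) ∘L D = E ∘L R ∘L (Z - A) := by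
  have hRZA : R ∘L Z ∘L adjoint A = R - 1 := by
    rw [mul_sub, mul_one, mul_def] at hR
    rw [← hR, sub_sub_cancel]
  have hRZDD : R ∘L Z ∘L D ∘L D = R ∘L (Z - A) + A := by
    calc R ∘L Z ∘L D ∘L D = R ∘L Z - (R ∘L Z ∘L adjoint A) ∘L A := by
          rw [← mul_def D D, hD.mul_self]
          simp only [comp_sub, comp_assoc, one_def, comp_id]
      _ = R ∘L (Z - A) + A := by
          rw [hRZA, sub_comp, comp_sub, one_def, id_comp]
          abel
  calc (-A + E ∘L R ∘L Z ∘L D) ∘L D = -(A ∘L D) + E ∘L R ∘L Z ∘L D ∘L D := by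
        simp only [add_comp, neg_comp, comp_assoc]
    _ = E ∘L R ∘L (Z - A) := by
        rw [hRZDD, comp_add, hD.comp_eq_comp hE, neg_add_cancel_comm_assoc]

theorem lemma_one_general (hD : IsDefectOperator A D) (hE : IsDefectOperator (adjoint A) E)
    (hE_inj : Function.Injective E) (hR₁ : R * (1 - Z ∘L adjoint A) = 1)
    (hR₂ : (1 - Z ∘L adjoint A) * R = 1) (v : K) :
    A v = Z v ↔ (-A + E ∘L R ∘L Z ∘L D) (D v) = 0 := by
  have hR_inj : Function.Injective R :=
    Function.LeftInverse.injective (g := ⇑(1 - Z ∘L adjoint A)) (DFunLike.congr_fun hR₂)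
  have hθ : (-A + E ∘L R ∘L Z ∘L D) (D v) = E (R (Z v - A v)) :=
    DFunLike.congr_fun (characteristicFunction_comp_defect hD hE hR₁) v
  rw [hθ, map_eq_zero_iff _ hE_inj, map_eq_zero_iff _ hR_inj, sub_eq_zero, eq_comm]

end DefectOperators

theorem lemma_one
    {H : Type*} [NormedAddCommGroup H] [InnerProductSpace ℂ H] [CompleteSpace H]
    (A₁ A₂ : H →L[ℂ] H)
    (hcomm : A₁ * A₂ = A₂ * A₁)
    (hcontr : A₁ * adjoint A₁ + A₂ * adjoint A₂ ≤ 1)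
    (Dstar : H →L[ℂ] H) (hDstar_pos : 0 ≤ Dstar)
    (hDstar_sq : Dstar * Dstar = 1 - A₁ * adjoint A₁ - A₂ * adjoint A₂)
    (hDstar_inj : Function.Injective ⇑Dstar)
    (Arow : WithLp 2 (H × H) →L[ℂ] H)
    (hArow : ∀ x y : H, Arow ((WithLp.equiv 2 (H × H)).symm (x, y)) = A₁ x + A₂ y)
    (DA : WithLp 2 (H × H) →L[ℂ] WithLp 2 (H × H)) (hDA_pos : 0 ≤ DA)
    (hDA_sq : DA * DA = 1 - (adjoint Arow) ∘L Arow)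
    (z₁ z₂ : ℂ) (hz : ‖z₁‖ ^ 2 + ‖z₂‖ ^ 2 < 1)
    (R : H →L[ℂ] H) (hR₁ : R * (1 - z₁ • adjoint A₁ - z₂ • adjoint A₂) = 1)
    (hR₂ : (1 - z₁ • adjoint A₁ - z₂ • adjoint A₂) * R = 1)
    (Zrow : WithLp 2 (H × H) →L[ℂ] H)
    (hZrow : ∀ x y : H, Zrow ((WithLp.equiv 2 (H × H)).symm (x, y)) = z₁ • x + z₂ • y)
    (x y : H) :
    A₁ x + A₂ y = z₁ • x + z₂ • y ↔ (-Arow + Dstar ∘L R ∘L Zrow ∘L DA) (DA ((WithLp.equiv 2 (H × H)).symm (x, y))) = 0 := by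
  have hAA : Arow ∘L adjoint Arow = A₁ ∘L adjoint A₁ + A₂ ∘L adjoint A₂ :=
    row_comp_adjoint_row hArow hArow
  have hZA : 1 - Zrow ∘L adjoint Arow = 1 - z₁ • adjoint A₁ - z₂ • adjoint A₂ := by
    rw [row_comp_adjoint_row (Z₁ := z₁ • 1) (Z₂ := z₂ • 1) hZrow hArow, smul_comp, smul_comp,
      one_def, id_comp, id_comp, sub_sub]
  have hE : IsDefectOperator (adjoint Arow) Dstar :=
    ⟨hDstar_pos, by rw [hDstar_sq, adjoint_adjoint, hAA, sub_sub, mul_def, mul_def]⟩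
  rw [← hArow, ← hZrow]
  exact lemma_one_general ⟨hDA_pos, hDA_sq⟩ hE hDstar_inj (hZA ▸ hR₁) (hZA ▸ hR₂) _
end

section
/- Let A = (A₁, A₂) be a commuting 2-contraction on H and (z₁,z₂) ∈ 𝔻². Then for every x ∈ H: (θ_A(z₁,z₂))*(D_{A*}x) = D_A( −(A₁*x, A₂*x) + ( z̄₁·u, z̄₂·u ) ), where u = (1_H − z̄₁A₁ − z̄₂A₂)⁻¹(D_{A*}²x) (the operator 1_H − z̄₁A₁ − z̄₂A₂ being invertible since (z₁,z₂) ∈ 𝔻²). -/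
/-!
For `X = A*`, the identity `A* (1 - A A*) = (1 - A* A) A*` says that `X` intertwines `D_{A*}²` with
`D_A²`. Passing to square roots gives `A* D_{A*} = D_A A*`, and this relation moves `D_{A*}` through
the first summand of `θ_A(z)* = -A* + D_A Z* (1 - A Z*)⁻¹ D_{A*}`.

To pass from `X a² = b² X` to `X a = b X` for positive `a`, `b`, put `T = X a - b X`. Then
`b T = -T a`, so `T* T a = -T* b T` is at once a product of two commuting positive operators and the
negative of a positive operator. Hence `T a = 0 = b T`, and then `T T* T = T a X* T - T X* b T = 0`.
-/

open ContinuousLinearMap Filter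

theorem eq_zero_of_comp_adjoint_comp_self_eq_zero {𝕜 E F : Type*} [RCLike 𝕜]
    [NormedAddCommGroup E] [InnerProductSpace 𝕜 E] [CompleteSpace E]
    [NormedAddCommGroup F] [InnerProductSpace 𝕜 F] [CompleteSpace F]
    {T : E →L[𝕜] F} (h : T ∘L adjoint T ∘L T = 0) : T = 0 := by
  rw [← adjoint_comp_self_eq_zero_iff, ← adjoint_comp_self_eq_zero_iff, adjoint_comp,
    adjoint_adjoint, comp_assoc, h, comp_zero]

section Intertwining

variable {E F : Type*}
  [NormedAddCommGroup E] [InnerProductSpace ℂ E] [CompleteSpace E]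
  [NormedAddCommGroup F] [InnerProductSpace ℂ F] [CompleteSpace F]

theorem comp_eq_zero_of_comp_eq_neg_comp_s5 {T : E →L[ℂ] F} {a : E →L[ℂ] E} {b : F →L[ℂ] F}
    (ha : 0 ≤ a) (hb : 0 ≤ b) (h : b ∘L T = -(T ∘L a)) : T ∘L a = 0 := by
  have gram_nonneg : 0 ≤ adjoint T ∘L T :=
    (nonneg_iff_isPositive _).2 (isPositive_adjoint_comp_self T)
  have conj_nonneg : 0 ≤ adjoint T ∘L b ∘L T :=
    (nonneg_iff_isPositive _).2 (((nonneg_iff_isPositive b).1 hb).adjoint_conj T)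
  have gram_mul : (adjoint T ∘L T) * a = -(adjoint T ∘L b ∘L T) := by
    rw [h, comp_neg, neg_neg, mul_def, comp_assoc]
  have gram_commute : Commute (adjoint T ∘L T) a :=
    (gram_nonneg.isSelfAdjoint.commute_iff ha.isSelfAdjoint).2
      (gram_mul ▸ conj_nonneg.isSelfAdjoint.neg)
  have gram_mul_eq_zero : (adjoint T ∘L T) * a = 0 :=
    le_antisymm (gram_mul ▸ neg_nonpos.2 conj_nonneg) (gram_commute.mul_nonneg gram_nonneg ha)
  rw [← adjoint_comp_self_eq_zero_iff, adjoint_comp, comp_assoc, ← comp_assoc _ T a, ← mul_def _ a,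
    gram_mul_eq_zero, comp_zero]

theorem comp_eq_comp_of_comp_mul_self_eq {X : E →L[ℂ] F} {a : E →L[ℂ] E} {b : F →L[ℂ] F}
    (ha : 0 ≤ a) (hb : 0 ≤ b) (h : X ∘L (a * a) = (b * b) ∘L X) : X ∘L a = b ∘L X := by
  set T := X ∘L a - b ∘L X with hT
  have anticomm : b ∘L T = -(T ∘L a) := by
    simp only [hT, comp_sub, sub_comp, comp_assoc, neg_sub]
    rw [← mul_def a, h, mul_def, comp_assoc]
  have comp_a : T ∘L a = 0 := comp_eq_zero_of_comp_eq_neg_comp_s5 ha hb anticomm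
  have b_comp : b ∘L T = 0 := by rw [anticomm, comp_a, neg_zero]
  have adjoint_T : adjoint T = a ∘L adjoint X - adjoint X ∘L b := by
    rw [hT, map_sub, adjoint_comp, adjoint_comp, ha.isSelfAdjoint.adjoint_eq,
      hb.isSelfAdjoint.adjoint_eq]
  have comp_adjoint_comp : T ∘L adjoint T ∘L T = 0 := calc
    T ∘L adjoint T ∘L T = (T ∘L a) ∘L adjoint X ∘L T - T ∘L adjoint X ∘L (b ∘L T) := by
      simp only [adjoint_T, sub_comp, comp_sub, comp_assoc]
    _ = 0 := by rw [comp_a, b_comp, zero_comp, comp_zero, comp_zero, sub_zero]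
  exact sub_eq_zero.1 (eq_zero_of_comp_adjoint_comp_self_eq_zero comp_adjoint_comp)

end Intertwining

section Defect

variable {H K : Type*}
  [NormedAddCommGroup H] [InnerProductSpace ℂ H] [CompleteSpace H]
  [NormedAddCommGroup K] [InnerProductSpace ℂ K] [CompleteSpace K]
  {A : K →L[ℂ] H} {Dstar : H →L[ℂ] H} {D : K →L[ℂ] K}

theorem adjoint_comp_defect (hDstar : 0 ≤ Dstar) (hDstar_sq : Dstar * Dstar = 1 - A ∘L adjoint A)
    (hD : 0 ≤ D) (hD_sq : D * D = 1 - adjoint A ∘L A) :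
    adjoint A ∘L Dstar = D ∘L adjoint A := by
  refine comp_eq_comp_of_comp_mul_self_eq hDstar hD ?_
  rw [hDstar_sq, hD_sq, comp_sub, sub_comp, one_def, one_def, comp_id, id_comp, comp_assoc]

-- For `Z = (z₁, z₂)` and `R = (1 - Z A*)⁻¹`, the operator under the adjoint is `θ_A(z₁, z₂)`.
theorem adjoint_characteristic_comp_defect
    (hDstar : 0 ≤ Dstar) (hDstar_sq : Dstar * Dstar = 1 - A ∘L adjoint A)
    (hD : 0 ≤ D) (hD_sq : D * D = 1 - adjoint A ∘L A) (R : H →L[ℂ] H) (Z : K →L[ℂ] H) :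
    adjoint (-A + Dstar ∘L R ∘L Z ∘L D) ∘L Dstar =
      D ∘L (-adjoint A + adjoint Z ∘L adjoint R ∘L Dstar ∘L Dstar) := by
  simp only [map_add, map_neg, adjoint_comp, hDstar.isSelfAdjoint.adjoint_eq,
    hD.isSelfAdjoint.adjoint_eq, add_comp, neg_comp, comp_add, comp_neg, comp_assoc,
    adjoint_comp_defect hDstar hDstar_sq hD hD_sq]

end Defect

section Row

variable {𝕜 E F G : Type*} [RCLike 𝕜]
  [NormedAddCommGroup E] [InnerProductSpace 𝕜 E] [CompleteSpace E]
  [NormedAddCommGroup F] [InnerProductSpace 𝕜 F] [CompleteSpace F]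
  [NormedAddCommGroup G] [InnerProductSpace 𝕜 G] [CompleteSpace G]
  {B : WithLp 2 (E × F) →L[𝕜] G} {B₁ : E →L[𝕜] G} {B₂ : F →L[𝕜] G}

theorem adjoint_row_apply_s5 (hB : ∀ x y, B (WithLp.toLp 2 (x, y)) = B₁ x + B₂ y) (w : G) :
    adjoint B w = WithLp.toLp 2 (adjoint B₁ w, adjoint B₂ w) := by
  refine ext_inner_right 𝕜 fun v => ?_
  have B_apply : B v = B₁ v.fst + B₂ v.snd := hB v.fst v.snd
  simp only [adjoint_inner_left, B_apply, inner_add_right, WithLp.prod_inner_apply,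
    WithLp.ofLp_fst, WithLp.ofLp_snd]

theorem row_comp_adjoint (hB : ∀ x y, B (WithLp.toLp 2 (x, y)) = B₁ x + B₂ y) :
    B ∘L adjoint B = B₁ ∘L adjoint B₁ + B₂ ∘L adjoint B₂ := by
  ext w
  simp only [comp_apply, add_apply, adjoint_row_apply_s5 hB, hB]

end Row

theorem star_eq_of_mul_eq_one {M : Type*} [Monoid M] [StarMul M] {r s t : M}
    (hr : r * t = 1) (hs : s * star t = 1) : star r = s :=
  (left_inv_eq_right_inv hs (by rw [← star_mul, hr, star_one])).symm

theorem theta_adjoint_apply_general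
    {H : Type*} [NormedAddCommGroup H] [InnerProductSpace ℂ H] [CompleteSpace H]
    (A₁ A₂ : H →L[ℂ] H)
    (Dstar : H →L[ℂ] H) (hDstar_pos : 0 ≤ Dstar)
    (hDstar_sq : Dstar * Dstar = 1 - A₁ * adjoint A₁ - A₂ * adjoint A₂)
    (Arow : WithLp 2 (H × H) →L[ℂ] H)
    (hArow : ∀ x y : H, Arow ((WithLp.equiv 2 (H × H)).symm (x, y)) = A₁ x + A₂ y)
    (DA : WithLp 2 (H × H) →L[ℂ] WithLp 2 (H × H)) (hDA_pos : 0 ≤ DA)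
    (hDA_sq : DA * DA = 1 - (adjoint Arow) ∘L Arow)
    (z₁ z₂ : ℂ)
    (R : H →L[ℂ] H) (hR : R * (1 - z₁ • adjoint A₁ - z₂ • adjoint A₂) = 1)
    (Zrow : WithLp 2 (H × H) →L[ℂ] H)
    (hZrow : ∀ x y : H, Zrow ((WithLp.equiv 2 (H × H)).symm (x, y)) = z₁ • x + z₂ • y)
    (S : H →L[ℂ] H)
    (hS : S * (1 - (starRingEnd ℂ z₁) • A₁ - (starRingEnd ℂ z₂) • A₂) = 1) :
    ∀ x : H,
      adjoint (-Arow + Dstar ∘L R ∘L Zrow ∘L DA) (Dstar x) =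
        DA ((WithLp.equiv 2 (H × H)).symm
          (-(adjoint A₁ x) + (starRingEnd ℂ z₁) • S (Dstar (Dstar x)),
            -(adjoint A₂ x) + (starRingEnd ℂ z₂) • S (Dstar (Dstar x)))) := by
  intro x
  have hDstar_sq' : Dstar * Dstar = 1 - Arow ∘L adjoint Arow := by
    rw [hDstar_sq, row_comp_adjoint hArow, sub_sub, mul_def, mul_def]
  have adjoint_R : adjoint R = S := by
    refine star_eq_of_mul_eq_one hR ?_
    simpa only [star_sub, star_one, star_smul, star_eq_adjoint, adjoint_adjoint,
      starRingEnd_apply] using hS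
  have adjoint_Zrow (w : H) : adjoint Zrow w =
      WithLp.toLp 2 (starRingEnd ℂ z₁ • w, starRingEnd ℂ z₂ • w) := by
    have row := adjoint_row_apply_s5 (B₁ := z₁ • (1 : H →L[ℂ] H)) (B₂ := z₂ • 1) hZrow w
    simpa only [map_smulₛₗ, adjoint_one, smul_apply, one_apply_eq_self] using row
  have key := DFunLike.congr_fun
    (adjoint_characteristic_comp_defect hDstar_pos hDstar_sq' hDA_pos hDA_sq R Zrow) x
  simpa only [comp_apply, add_apply, neg_apply, adjoint_R, adjoint_Zrow, adjoint_row_apply_s5 hArow,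
    ← WithLp.toLp_neg, ← WithLp.toLp_add, Prod.neg_mk, Prod.mk_add_mk, WithLp.equiv_symm_apply]
    using key

theorem theta_adjoint_apply
    {H : Type*} [NormedAddCommGroup H] [InnerProductSpace ℂ H] [CompleteSpace H]
    (A₁ A₂ : H →L[ℂ] H)
    (hcomm : A₁ * A₂ = A₂ * A₁)
    (hcontr : A₁ * adjoint A₁ + A₂ * adjoint A₂ ≤ 1)
    (Dstar : H →L[ℂ] H) (hDstar_pos : 0 ≤ Dstar)
    (hDstar_sq : Dstar * Dstar = 1 - A₁ * adjoint A₁ - A₂ * adjoint A₂)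
    (Arow : WithLp 2 (H × H) →L[ℂ] H)
    (hArow : ∀ x y : H, Arow ((WithLp.equiv 2 (H × H)).symm (x, y)) = A₁ x + A₂ y)
    (DA : WithLp 2 (H × H) →L[ℂ] WithLp 2 (H × H)) (hDA_pos : 0 ≤ DA)
    (hDA_sq : DA * DA = 1 - (adjoint Arow) ∘L Arow)
    (z₁ z₂ : ℂ) (hz : ‖z₁‖ ^ 2 + ‖z₂‖ ^ 2 < 1)
    (R : H →L[ℂ] H) (hR₁ : R * (1 - z₁ • adjoint A₁ - z₂ • adjoint A₂) = 1)
    (hR₂ : (1 - z₁ • adjoint A₁ - z₂ • adjoint A₂) * R = 1)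
    (Zrow : WithLp 2 (H × H) →L[ℂ] H)
    (hZrow : ∀ x y : H, Zrow ((WithLp.equiv 2 (H × H)).symm (x, y)) = z₁ • x + z₂ • y)
    (S : H →L[ℂ] H)
    (hS₁ : S * (1 - (starRingEnd ℂ z₁) • A₁ - (starRingEnd ℂ z₂) • A₂) = 1)
    (hS₂ : (1 - (starRingEnd ℂ z₁) • A₁ - (starRingEnd ℂ z₂) • A₂) * S = 1) :
    ∀ x : H,
      adjoint (-Arow + Dstar ∘L R ∘L Zrow ∘L DA) (Dstar x) =
        DA ((WithLp.equiv 2 (H × H)).symm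
          (-(adjoint A₁ x) + (starRingEnd ℂ z₁) • S (Dstar (Dstar x)),
            -(adjoint A₂ x) + (starRingEnd ℂ z₂) • S (Dstar (Dstar x)))) := by
  exact theta_adjoint_apply_general A₁ A₂ Dstar hDstar_pos hDstar_sq Arow hArow DA hDA_pos hDA_sq
    z₁ z₂ R hR₁ Zrow hZrow S hS₁
end

section
/- (Proposition 2.) Let A = (A₁, A₂) be a commuting 2-contraction on H such that D_{A*} is injective, and let (z₁,z₂) ∈ 𝔻². If there exists y ≠ 0 in H with (θ_A(z₁,z₂))*(D_{A*}y) = 0, then (z₁,z₂) ∈ σ_T^{(3)}(A). -/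
open ContinuousLinearMap Filter

/-!
The argument is about a single operator `A : K → H` and an arbitrary `Z : K → H` in place of the
row `(z₁, z₂)`, with `R = (1 - Z A*)⁻¹`. Since `D_A² A* = A* D_{A*}²`, the positive square roots
also satisfy `D_A A* = A* D_{A*}`, so the hypothesis on `θ = -A + D_{A*} R Z D_A` reads
`D_A (Z* w - A* y) = 0` with `w = R* D_{A*}² y`. Injectivity of `D_{A*}` passes to `D_A`, so
`A* y = Z* w`. Then `(1 - A Z*) w = D_{A*}² y = y - A A* y = y - A Z* w` forces `w = y`. Hence `y`
lies in the kernel of `A* - Z*`, that is, it is orthogonal to the range of `A - Z`.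
-/

section Intertwining

variable {E F : Type*}
  [NormedAddCommGroup E] [InnerProductSpace ℂ E] [CompleteSpace E]
  [NormedAddCommGroup F] [InnerProductSpace ℂ F] [CompleteSpace F]
  {S : F →L[ℂ] F} {D : E →L[ℂ] E}

theorem comp_eq_zero_of_comp_eq_neg_comp_of_nonneg {Y : E →L[ℂ] F} (hS : 0 ≤ S) (hD : 0 ≤ D)
    (h : S ∘L Y = -(Y ∘L D)) : Y ∘L D = 0 := by
  set P : E →L[ℂ] E := adjoint Y ∘L Y
  set N : E →L[ℂ] E := adjoint Y ∘L S ∘L Y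
  have hP : 0 ≤ P := (nonneg_iff_isPositive P).2 (isPositive_adjoint_comp_self Y)
  have hN : 0 ≤ N :=
    (nonneg_iff_isPositive N).2 (((nonneg_iff_isPositive S).1 hS).adjoint_conj Y)
  have hPD : P * D = -N := by
    simp only [N, h, comp_neg, neg_neg]
    rfl
  -- `P D = -N` is self-adjoint, so `P` and `D` commute and their product is also nonnegative.
  have hcomm : Commute P D :=
    (hP.isSelfAdjoint.commute_iff hD.isSelfAdjoint).2 (hPD ▸ hN.isSelfAdjoint.neg)
  have hPD_zero : P * D = 0 :=
    le_antisymm (hPD.trans_le (neg_nonpos.2 hN)) (hcomm.mul_nonneg hP hD)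
  rw [← adjoint_comp_self_eq_zero_iff, adjoint_comp, comp_assoc]
  calc adjoint D ∘L adjoint Y ∘L Y ∘L D = adjoint D ∘L (P * D) := rfl
    _ = 0 := by rw [hPD_zero, comp_zero]

theorem comp_eq_comp_of_mul_self_comp_eq_comp_mul_self {X : E →L[ℂ] F} (hS : 0 ≤ S) (hD : 0 ≤ D)
    (h : (S * S) ∘L X = X ∘L (D * D)) : S ∘L X = X ∘L D := by
  set Y : E →L[ℂ] F := S ∘L X - X ∘L D with hY
  have hanti : S ∘L Y = -(Y ∘L D) := by
    rw [hY, comp_sub, sub_comp, neg_sub, comp_assoc X D D, ← mul_def D D, ← h]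
    rfl
  have hYD : Y ∘L D = 0 := comp_eq_zero_of_comp_eq_neg_comp_of_nonneg hS hD hanti
  have hSY : S ∘L Y = 0 := by rw [hanti, hYD, neg_zero]
  have hDY : D ∘L adjoint Y = 0 := by
    simpa [adjoint_comp, hD.isSelfAdjoint.adjoint_eq] using congrArg adjoint hYD
  have hYS : adjoint Y ∘L S = 0 := by
    simpa [adjoint_comp, hS.isSelfAdjoint.adjoint_eq] using congrArg adjoint hSY
  have hYYY : (adjoint Y ∘L Y) ∘L adjoint Y = 0 :=
    calc (adjoint Y ∘L Y) ∘L adjoint Y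
        = (adjoint Y ∘L S) ∘L X ∘L adjoint Y - (adjoint Y ∘L X) ∘L D ∘L adjoint Y := by
          nth_rewrite 2 [hY]
          simp only [comp_sub, sub_comp, comp_assoc]
      _ = 0 := by simp only [hYS, hDY, zero_comp, comp_zero, sub_zero]
  have hYY : adjoint Y ∘L Y = 0 := by
    rw [← adjoint_comp_self_eq_zero_iff, adjoint_comp, adjoint_adjoint, ← comp_assoc, hYYY,
      zero_comp]
  exact sub_eq_zero.1 (adjoint_comp_self_eq_zero_iff.1 hYY)

end Intertwining

section Defect

variable {E F : Type*}
  [NormedAddCommGroup E] [InnerProductSpace ℂ E] [CompleteSpace E]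
  [NormedAddCommGroup F] [InnerProductSpace ℂ F] [CompleteSpace F]

/-- `D` is the defect operator `D_T = (1 - T* T)^{1/2}` of `T`, characterised as a nonnegative
square root; the existence of such a `D` says that `T` is a contraction. -/
structure IsDefectOperator_s9 (D : E →L[ℂ] E) (T : E →L[ℂ] F) : Prop where
  nonneg : 0 ≤ D
  mul_self_eq : D * D = 1 - adjoint T ∘L T

namespace IsDefectOperator_s9

variable {D : E →L[ℂ] E} {D' : F →L[ℂ] F} {T : E →L[ℂ] F}

theorem apply_apply (hD : IsDefectOperator_s9 D T) (x : E) : D (D x) = x - adjoint T (T x) :=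
  DFunLike.congr_fun hD.mul_self_eq x

theorem adjoint_apply_apply (hD' : IsDefectOperator_s9 D' (adjoint T)) (x : F) :
    D' (D' x) = x - T (adjoint T x) := by
  rw [hD'.apply_apply, adjoint_adjoint]

theorem apply_adjoint_apply (hD : IsDefectOperator_s9 D T) (hD' : IsDefectOperator_s9 D' (adjoint T))
    (x : F) : D (adjoint T x) = adjoint T (D' x) := by
  refine DFunLike.congr_fun
    (comp_eq_comp_of_mul_self_comp_eq_comp_mul_self hD.nonneg hD'.nonneg (X := adjoint T) ?_) x
  rw [hD.mul_self_eq, hD'.mul_self_eq, adjoint_adjoint, sub_comp, comp_sub, comp_assoc]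
  rfl

theorem injective (hD : IsDefectOperator_s9 D T) (hD' : IsDefectOperator_s9 D' (adjoint T))
    (hinj : Function.Injective D') : Function.Injective D := by
  refine (injective_iff_map_eq_zero D).2 fun x hx => ?_
  have hfix : x = adjoint T (T x) := by
    rw [← sub_eq_zero, ← hD.apply_apply, hx, map_zero]
  have hDTx : D' (D' (T x)) = 0 := by
    rw [hD'.adjoint_apply_apply, ← hfix, sub_self]
  have hTx : T x = 0 := hinj (hinj (by rw [hDTx, map_zero, map_zero]))
  rw [hfix, hTx, map_zero]

end IsDefectOperator_s9

end Defect

section Characteristic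

variable {K H : Type*}
  [NormedAddCommGroup K] [InnerProductSpace ℂ K] [CompleteSpace K]
  [NormedAddCommGroup H] [InnerProductSpace ℂ H] [CompleteSpace H]
  {A Z : K →L[ℂ] H} {DA : K →L[ℂ] K} {Dstar R : H →L[ℂ] H}

theorem adjoint_characteristic_apply (hDA : IsDefectOperator_s9 DA A)
    (hDstar : IsDefectOperator_s9 Dstar (adjoint A)) (y : H) :
    adjoint (-A + Dstar ∘L R ∘L Z ∘L DA) (Dstar y) =
      DA (adjoint Z (adjoint R (Dstar (Dstar y))) - adjoint A y) := by
  rw [map_sub, hDA.apply_adjoint_apply hDstar]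
  simp only [map_add, map_neg, adjoint_comp, hDA.nonneg.isSelfAdjoint.adjoint_eq,
    hDstar.nonneg.isSelfAdjoint.adjoint_eq, add_apply, neg_apply, comp_apply]
  exact neg_add_eq_sub _ _

theorem adjoint_apply_eq_of_adjoint_characteristic_apply_eq_zero (hDA : IsDefectOperator_s9 DA A)
    (hDstar : IsDefectOperator_s9 Dstar (adjoint A)) (hinj : Function.Injective Dstar)
    (hR : R * (1 - Z ∘L adjoint A) = 1) {y : H}
    (hθ : adjoint (-A + Dstar ∘L R ∘L Z ∘L DA) (Dstar y) = 0) :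
    adjoint A y = adjoint Z y := by
  set w : H := adjoint R (Dstar (Dstar y))
  have hAZ : adjoint A y = adjoint Z w := by
    rw [adjoint_characteristic_apply hDA hDstar] at hθ
    exact (sub_eq_zero.1 ((injective_iff_map_eq_zero DA).1 (hDA.injective hDstar hinj) _ hθ)).symm
  have hR_adjoint : (1 - A ∘L adjoint Z) * adjoint R = 1 :=
    calc (1 - A ∘L adjoint Z) * adjoint R = star (1 - Z ∘L adjoint A) * star R := by
          simp only [star_sub, star_one, star_eq_adjoint, adjoint_comp, adjoint_adjoint]
      _ = 1 := by rw [← star_mul, hR, star_one]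
  have hwy : w - A (adjoint Z w) = y - A (adjoint Z w) :=
    calc w - A (adjoint Z w) = Dstar (Dstar y) := DFunLike.congr_fun hR_adjoint (Dstar (Dstar y))
      _ = y - A (adjoint Z w) := by rw [hDstar.adjoint_apply_apply, hAZ]
  rw [hAZ, sub_left_injective hwy]

theorem sigma_three_sufficient_general (hDA : IsDefectOperator_s9 DA A)
    (hDstar : IsDefectOperator_s9 Dstar (adjoint A)) (hinj : Function.Injective Dstar)
    (hR : R * (1 - Z ∘L adjoint A) = 1) {y : H} (hy : y ≠ 0)
    (hθ : adjoint (-A + Dstar ∘L R ∘L Z ∘L DA) (Dstar y) = 0) :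
    ¬ Function.Surjective (A - Z) := by
  intro hsurj
  have hker : y ∈ (adjoint (A - Z)).ker := by
    rw [LinearMap.mem_ker, coe_coe, map_sub, sub_apply, sub_eq_zero]
    exact adjoint_apply_eq_of_adjoint_characteristic_apply_eq_zero hDA hDstar hinj hR hθ
  rw [← orthogonal_range, LinearMap.range_eq_top.2 hsurj, Submodule.top_orthogonal_eq_bot] at hker
  exact hy ((Submodule.mem_bot ℂ).1 hker)

end Characteristic

section Row

variable {𝕜 E₁ E₂ F G : Type*} [RCLike 𝕜]
  [NormedAddCommGroup E₁] [InnerProductSpace 𝕜 E₁] [CompleteSpace E₁]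
  [NormedAddCommGroup E₂] [InnerProductSpace 𝕜 E₂] [CompleteSpace E₂]
  [NormedAddCommGroup F] [InnerProductSpace 𝕜 F] [CompleteSpace F]
  {A₁ : E₁ →L[𝕜] F} {A₂ : E₂ →L[𝕜] F} {A : WithLp 2 (E₁ × E₂) →L[𝕜] F}

theorem adjoint_row_apply_s9
    (hA : ∀ x y, A ((WithLp.equiv 2 (E₁ × E₂)).symm (x, y)) = A₁ x + A₂ y) (v : F) :
    adjoint A v = (WithLp.equiv 2 (E₁ × E₂)).symm (adjoint A₁ v, adjoint A₂ v) := by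
  refine ext_inner_right 𝕜 fun p => ?_
  have hAp : A p = A₁ p.fst + A₂ p.snd := hA p.fst p.snd
  rw [adjoint_inner_left, hAp, inner_add_right, WithLp.prod_inner_apply]
  simp only [WithLp.equiv_symm_apply, adjoint_inner_left, WithLp.ofLp_fst, WithLp.ofLp_snd]

theorem row_comp_adjoint_row_s9 [NormedAddCommGroup G] [NormedSpace 𝕜 G]
    {B₁ : E₁ →L[𝕜] G} {B₂ : E₂ →L[𝕜] G} {B : WithLp 2 (E₁ × E₂) →L[𝕜] G}
    (hB : ∀ x y, B ((WithLp.equiv 2 (E₁ × E₂)).symm (x, y)) = B₁ x + B₂ y)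
    (hA : ∀ x y, A ((WithLp.equiv 2 (E₁ × E₂)).symm (x, y)) = A₁ x + A₂ y) :
    B ∘L adjoint A = B₁ ∘L adjoint A₁ + B₂ ∘L adjoint A₂ := by
  ext v
  rw [comp_apply, adjoint_row_apply_s9 hA, hB]
  rfl

end Row

theorem sigma_three_sufficient
    {H : Type*} [NormedAddCommGroup H] [InnerProductSpace ℂ H] [CompleteSpace H]
    (A₁ A₂ : H →L[ℂ] H)
    (hcomm : A₁ * A₂ = A₂ * A₁)
    (hcontr : A₁ * adjoint A₁ + A₂ * adjoint A₂ ≤ 1)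
    (Dstar : H →L[ℂ] H) (hDstar_pos : 0 ≤ Dstar)
    (hDstar_sq : Dstar * Dstar = 1 - A₁ * adjoint A₁ - A₂ * adjoint A₂)
    (hDstar_inj : Function.Injective ⇑Dstar)
    (Arow : WithLp 2 (H × H) →L[ℂ] H)
    (hArow : ∀ x y : H, Arow ((WithLp.equiv 2 (H × H)).symm (x, y)) = A₁ x + A₂ y)
    (DA : WithLp 2 (H × H) →L[ℂ] WithLp 2 (H × H)) (hDA_pos : 0 ≤ DA)
    (hDA_sq : DA * DA = 1 - (adjoint Arow) ∘L Arow)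
    (z₁ z₂ : ℂ) (hz : ‖z₁‖ ^ 2 + ‖z₂‖ ^ 2 < 1)
    (R : H →L[ℂ] H) (hR₁ : R * (1 - z₁ • adjoint A₁ - z₂ • adjoint A₂) = 1)
    (hR₂ : (1 - z₁ • adjoint A₁ - z₂ • adjoint A₂) * R = 1)
    (Zrow : WithLp 2 (H × H) →L[ℂ] H)
    (hZrow : ∀ x y : H, Zrow ((WithLp.equiv 2 (H × H)).symm (x, y)) = z₁ • x + z₂ • y)
    (y : H) (hy : y ≠ 0)
    (hθ : adjoint (-Arow + Dstar ∘L R ∘L Zrow ∘L DA) (Dstar y) = 0) :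
    ¬ Function.Surjective (fun p : H × H => (A₁ p.1 - z₁ • p.1) - (A₂ p.2 - z₂ • p.2)) := by
  have hAA : Arow ∘L adjoint Arow = A₁ * adjoint A₁ + A₂ * adjoint A₂ :=
    row_comp_adjoint_row_s9 hArow hArow
  have hZA : Zrow ∘L adjoint Arow = z₁ • adjoint A₁ + z₂ • adjoint A₂ :=
    row_comp_adjoint_row_s9 (B₁ := z₁ • 1) (B₂ := z₂ • 1) hZrow hArow
  have hdefect : IsDefectOperator_s9 Dstar (adjoint Arow) :=
    ⟨hDstar_pos, by rw [hDstar_sq, adjoint_adjoint, hAA, sub_sub]⟩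
  have hR : R * (1 - Zrow ∘L adjoint Arow) = 1 := by rw [hZA, ← sub_sub, hR₁]
  intro hsurj
  refine sigma_three_sufficient_general ⟨hDA_pos, hDA_sq⟩ hdefect hDstar_inj hR hy hθ fun h => ?_
  obtain ⟨p, rfl⟩ := hsurj h
  refine ⟨(WithLp.equiv 2 (H × H)).symm (p.1, -p.2), ?_⟩
  rw [sub_apply, hArow, hZrow]
  simp only [map_neg, smul_neg]
  abel
end

section
/- (Part of Proposition 4.1.) Let A = (A₁, A₂) be a commuting 2-contraction on H and λ = (λ₁,λ₂) ∈ 𝔻², λ ≠ 0. Then the pair (B₁(λ), B₂(λ)) of components of Φ_λ(A) is a commuting 2-contraction: B₁(λ)B₂(λ) = B₂(λ)B₁(λ) and B₁(λ)B₁(λ)* + B₂(λ)B₂(λ)* ≤ 1_H. -/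
open ContinuousLinearMap Filter

/-!
Since `Λ Λ* = (1 - s²) 1`, the operator `Q = Λ* Λ` satisfies `Q² = (1 - s²) Q`, so `D² = 1 - Q`
forces `(D + 1) (D + s) (D - 1) (D - s) = 0`. For `D ≥ 0` and `s > 0` the first two factors are
invertible, and the remaining quadratic equation becomes linear in `D` once `D² = 1 - Q` is
substituted: `D = 1 - (1 + s)⁻¹ Q`. With `T = (1 - A Λ*)⁻¹` this turns `Φ = Λ - s T A D` into
`Φ = (1 + s)⁻¹ (1 + s T) Λ - s T A`.

Hence the entries of `Φ` are `(1 + s)⁻¹ λᵢ (1 + s T) - s T Aᵢ`, and these commute because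
`T` is the inverse of `1 - ∑ λ̄ᵢ Aᵢ`. Expanding `Φ Φ*` and using `T A Λ* = T - 1` gives
`1 - Φ Φ* = s² T (1 - A A*) T*`, which is positive when `A` is a row contraction.
-/

section Mobius

variable {𝕜 H K : Type*} [RCLike 𝕜]
  [NormedAddCommGroup H] [InnerProductSpace 𝕜 H] [CompleteSpace H]
  [NormedAddCommGroup K] [InnerProductSpace 𝕜 K] [CompleteSpace K]

theorem isUnit_add_smul_one_of_nonneg {D : H →L[𝕜] H} (hD : 0 ≤ D) {r : ℝ} (hr : 0 < r) :
    IsUnit (D + (r : 𝕜) • 1) := by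
  refine isUnit_of_forall_le_norm_inner_map _ (c := ⟨r, hr.le⟩) hr fun x ↦ ?_
  calc ‖x‖ ^ 2 * r = RCLike.re (inner 𝕜 ((r : 𝕜) • x) x) := by
        rw [inner_smul_left, RCLike.conj_ofReal, RCLike.re_ofReal_mul, inner_self_eq_norm_sq,
          mul_comm]
    _ ≤ RCLike.re (inner 𝕜 (D x) x) + RCLike.re (inner 𝕜 ((r : 𝕜) • x) x) :=
        le_add_of_nonneg_left (((nonneg_iff_isPositive D).1 hD).re_inner_nonneg_left x)
    _ = RCLike.re (inner 𝕜 ((D + (r : 𝕜) • 1) x) x) := by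
        simp only [add_apply, smul_apply, one_apply_eq_self, inner_add_left, map_add]
    _ ≤ ‖inner 𝕜 ((D + (r : 𝕜) • 1) x) x‖ := RCLike.re_le_norm _

theorem eq_one_sub_smul_of_mul_self_eq_one_sub {D P : H →L[𝕜] H} {s : ℝ} (hs : 0 < s)
    (hD : 0 ≤ D) (hDD : D * D = 1 - P) (hPP : P * P = (1 - (s : 𝕜) ^ 2) • P) :
    D = 1 - (1 + (s : 𝕜))⁻¹ • P := by
  have hs1 : (1 + (s : 𝕜)) ≠ 0 := by exact_mod_cast (by positivity : 1 + s ≠ 0)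
  have hquartic : (D + ((1 : ℝ) : 𝕜) • 1) * ((D + (s : 𝕜) • 1) * ((D - 1) * (D - (s : 𝕜) • 1)))
      = 0 := by
    calc _ = (D * D - 1) * (D * D - (s : 𝕜) ^ 2 • 1) := by
          simp only [RCLike.ofReal_one, one_smul, add_mul, mul_add, sub_mul, mul_sub, one_mul,
            mul_one, smul_mul_assoc, mul_smul_comm, mul_assoc]
          module
      _ = 0 := by
          rw [hDD]
          simp only [sub_mul, mul_sub, one_mul, mul_one, mul_smul_comm, hPP]
          module
  have hquadratic : (D - 1) * (D - (s : 𝕜) • 1) = 0 := by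
    rwa [(isUnit_add_smul_one_of_nonneg hD one_pos).mul_right_eq_zero,
      (isUnit_add_smul_one_of_nonneg hD hs).mul_right_eq_zero] at hquartic
  have hlinear : (1 + (s : 𝕜)) • D = (1 + (s : 𝕜)) • 1 - P := by
    simp only [sub_mul, mul_sub, one_mul, mul_smul_comm, mul_one, hDD] at hquadratic
    rw [← sub_eq_zero, ← neg_eq_zero, ← hquadratic]
    module
  rw [← inv_smul_smul₀ hs1 D, hlinear, smul_sub, inv_smul_smul₀ hs1]

theorem defect_eq_one_sub_smul {L : K →L[𝕜] H} {D : K →L[𝕜] K} {s : ℝ} (hs : 0 < s)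
    (hL : L ∘L adjoint L = (1 - (s : 𝕜) ^ 2) • 1) (hD : 0 ≤ D)
    (hDD : D * D = 1 - adjoint L ∘L L) :
    D = 1 - (1 + (s : 𝕜))⁻¹ • (adjoint L ∘L L) := by
  refine eq_one_sub_smul_of_mul_self_eq_one_sub hs hD hDD ?_
  rw [mul_def, comp_assoc, ← comp_assoc L, hL, smul_comp, comp_smul, one_def, id_comp]

/-- The operator `Φ_λ(A) = Λ - D_{Λ*} (1 - A Λ*)⁻¹ A D_Λ` for a row `L = Λ` with `D_{Λ*} = s`. The
defect operator `D = D_Λ` and the inverse `T = (1 - A Λ*)⁻¹` are arguments, characterised by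
hypotheses where they are needed. -/
def mobius (s : ℝ) (L A : K →L[𝕜] H) (D : K →L[𝕜] K) (T : H →L[𝕜] H) : K →L[𝕜] H :=
  L - (s : 𝕜) • (T ∘L A ∘L D)

variable {s : ℝ} {L A : K →L[𝕜] H} {D : K →L[𝕜] K} {T : H →L[𝕜] H}

theorem mobius_eq (hs : 0 < s) (hL : L ∘L adjoint L = (1 - (s : 𝕜) ^ 2) • 1) (hD : 0 ≤ D)
    (hDD : D * D = 1 - adjoint L ∘L L) (hT : T * (1 - A ∘L adjoint L) = 1) :
    mobius s L A D T
      = (1 + (s : 𝕜))⁻¹ • ((1 + (s : 𝕜) • T) ∘L L) - (s : 𝕜) • (T ∘L A) := by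
  have hs1 : (1 + (s : 𝕜)) ≠ 0 := by exact_mod_cast (by positivity : 1 + s ≠ 0)
  have hTAL : T ∘L A ∘L adjoint L = T - 1 := by
    rw [← hT, mul_sub, mul_one, sub_sub_cancel]; rfl
  have hTAD : T ∘L A ∘L D = T ∘L A - (1 + (s : 𝕜))⁻¹ • ((T - 1) ∘L L) := by
    rw [defect_eq_one_sub_smul hs hL hD hDD, ← hTAL]
    simp only [one_def, comp_sub, comp_smul, comp_id, comp_assoc]
  rw [mobius, hTAD, sub_comp, add_comp, smul_comp, one_def, id_comp]
  match_scalars <;> field_simp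
  ring

theorem sub_comp_adjoint_sub (X Y : H →L[𝕜] H) :
    (X ∘L L - Y ∘L A) ∘L adjoint (X ∘L L - Y ∘L A)
      = X * (L ∘L adjoint L) * adjoint X - X * adjoint (Y * (A ∘L adjoint L))
        - Y * (A ∘L adjoint L) * adjoint X + Y * (A ∘L adjoint A) * adjoint Y := by
  ext x
  simp only [map_sub, adjoint_comp, adjoint_adjoint, mul_def, comp_sub, sub_comp, sub_apply,
    add_apply, comp_apply]
  abel

theorem one_sub_mobius_comp_adjoint (hs : 0 < s) (hL : L ∘L adjoint L = (1 - (s : 𝕜) ^ 2) • 1)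
    (hD : 0 ≤ D) (hDD : D * D = 1 - adjoint L ∘L L) (hT : T * (1 - A ∘L adjoint L) = 1) :
    1 - mobius s L A D T ∘L adjoint (mobius s L A D T)
      = (s : 𝕜) ^ 2 • (T * (1 - A ∘L adjoint A) * adjoint T) := by
  have hs1 : (1 + (s : 𝕜)) ≠ 0 := by exact_mod_cast (by positivity : 1 + s ≠ 0)
  have hTAL : T * (A ∘L adjoint L) = T - 1 := by
    rw [← hT, mul_sub, mul_one, sub_sub_cancel]
  rw [mobius_eq hs hL hD hDD hT, ← smul_comp, ← smul_comp, sub_comp_adjoint_sub, hL,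
    smul_mul_assoc (s : 𝕜) T (A ∘L adjoint L), hTAL]
  simp only [map_smulₛₗ, map_add, map_sub, adjoint_one, map_inv₀, map_one, RCLike.conj_ofReal]
  simp only [smul_mul_assoc, mul_smul_comm, add_mul, mul_add, sub_mul, mul_sub, one_mul, mul_one]
  match_scalars <;> field_simp <;> ring

theorem mobius_comp_adjoint_le_one (hs : 0 < s) (hL : L ∘L adjoint L = (1 - (s : 𝕜) ^ 2) • 1)
    (hD : 0 ≤ D) (hDD : D * D = 1 - adjoint L ∘L L) (hT : T * (1 - A ∘L adjoint L) = 1)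
    (hA : A ∘L adjoint A ≤ 1) :
    mobius s L A D T ∘L adjoint (mobius s L A D T) ≤ 1 := by
  rw [ContinuousLinearMap.le_def, one_sub_mobius_comp_adjoint hs hL hD hDD hT]
  exact (((ContinuousLinearMap.le_def _ _).1 hA).conj_adjoint T).smul_of_nonneg
    (by exact_mod_cast sq_nonneg s)

end Mobius

section Algebra

theorem commute_smul_sub_smul {R S : Type*} [CommRing R] [Ring S] [Algebra R S] {T a b : S}
    (hTa : Commute T a) (hTb : Commute T b) (hab : Commute a b) (α β s : R) :
    Commute (α • (1 + s • T) - s • (T * a)) (β • (1 + s • T) - s • (T * b)) := by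
  have hX {c : S} (hTc : Commute T c) : Commute (1 + s • T) (T * c) :=
    (Commute.one_left _).add_left (((Commute.refl T).mul_right hTc).smul_left s)
  have hTaTb : Commute (T * a) (T * b) :=
    ((Commute.refl T).mul_right hTb).mul_left (hTa.symm.mul_right hab)
  exact ((((Commute.refl _).smul_right β).sub_right ((hX hTb).smul_right s)).smul_left α).sub_left
    (((((hX hTa).symm).smul_right β).sub_right (hTaTb.smul_right s)).smul_left s)

theorem commute_of_inverse_one_sub {S : Type*} [Ring S] {T M a : S} (hT : T * (1 - M) = 1)
    (hT' : (1 - M) * T = 1) (hM : Commute M a) : Commute T a :=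
  letI : Invertible (1 - M) := ⟨T, hT, hT'⟩
  ((Commute.one_left a).sub_left hM).symm.invOf_right.symm

end Algebra

section Coordinates

variable {𝕜 ι H K : Type*} [RCLike 𝕜] [Fintype ι]
  [NormedAddCommGroup H] [InnerProductSpace 𝕜 H] [CompleteSpace H]
  [NormedAddCommGroup K] [InnerProductSpace 𝕜 K] [CompleteSpace K]

variable {G : Type*} [NormedAddCommGroup G] [NormedSpace 𝕜 G]
  {P : ι → K →L[𝕜] H} {R : K →L[𝕜] G} {S : K →L[𝕜] H} {r : ι → H →L[𝕜] G} {μ : ι → 𝕜}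

theorem comp_adjoint_eq_sum {F : Type*} [NormedAddCommGroup F] [InnerProductSpace 𝕜 F]
    [CompleteSpace F] {S : K →L[𝕜] F} {t : ι → H →L[𝕜] F}
    (hP : ∑ i, adjoint (P i) ∘L P i = 1)
    (hR : ∀ i, R ∘L adjoint (P i) = r i) (hS : ∀ i, S ∘L adjoint (P i) = t i) :
    R ∘L adjoint S = ∑ i, r i ∘L adjoint (t i) := by
  calc R ∘L adjoint S = R ∘L (∑ i, adjoint (P i) ∘L P i) ∘L adjoint S := by
        rw [hP, one_def, id_comp]
    _ = ∑ i, (R ∘L adjoint (P i)) ∘L adjoint (S ∘L adjoint (P i)) := by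
        simp only [finsetSum_comp, comp_finsetSum, adjoint_comp, adjoint_adjoint, comp_assoc]
    _ = ∑ i, r i ∘L adjoint (t i) := by simp only [hR, hS]

theorem comp_adjoint_eq_sum_conj_smul (hP : ∑ i, adjoint (P i) ∘L P i = 1)
    (hR : ∀ i, R ∘L adjoint (P i) = r i) (hS : ∀ i, S ∘L adjoint (P i) = μ i • 1) :
    R ∘L adjoint S = ∑ i, starRingEnd 𝕜 (μ i) • r i := by
  simp only [comp_adjoint_eq_sum hP hR hS, map_smulₛₗ, adjoint_one, comp_smul]
  simp only [one_def, comp_id]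

theorem comp_adjoint_self_eq_smul_one (hP : ∑ i, adjoint (P i) ∘L P i = 1)
    (hS : ∀ i, S ∘L adjoint (P i) = μ i • 1) :
    S ∘L adjoint S = ((∑ i, ‖μ i‖ ^ 2 : ℝ) : 𝕜) • 1 := by
  rw [comp_adjoint_eq_sum_conj_smul hP hS hS, RCLike.ofReal_sum, Finset.sum_smul]
  simp only [smul_smul, RCLike.conj_mul, RCLike.ofReal_pow]

/-- The coordinate projections of the Hilbert sum `H ⊕ H`, indexed by `Fin 2` so that a pair
is a tuple in the sense of `phi_of_A_is_two_contraction_general`. -/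
def pairCoord (𝕜 H : Type*) [RCLike 𝕜] [NormedAddCommGroup H] [InnerProductSpace 𝕜 H] :
    Fin 2 → WithLp 2 (H × H) →L[𝕜] H :=
  ![WithLp.fstL 2 𝕜 H H, WithLp.sndL 2 𝕜 H H]

theorem adjoint_fstL_apply {E F : Type*} [NormedAddCommGroup E] [InnerProductSpace 𝕜 E]
    [CompleteSpace E] [NormedAddCommGroup F] [InnerProductSpace 𝕜 F] [CompleteSpace F] (x : E) :
    adjoint (WithLp.fstL 2 𝕜 E F) x = WithLp.toLp 2 (x, 0) := by
  refine ext_inner_right 𝕜 fun v ↦ ?_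
  simp [adjoint_inner_left, WithLp.prod_inner_apply]

theorem adjoint_sndL_apply {E F : Type*} [NormedAddCommGroup E] [InnerProductSpace 𝕜 E]
    [CompleteSpace E] [NormedAddCommGroup F] [InnerProductSpace 𝕜 F] [CompleteSpace F] (y : F) :
    adjoint (WithLp.sndL 2 𝕜 E F) y = WithLp.toLp 2 (0, y) := by
  refine ext_inner_right 𝕜 fun v ↦ ?_
  simp [adjoint_inner_left, WithLp.prod_inner_apply]

theorem sum_adjoint_pairCoord_comp :
    ∑ i, adjoint (pairCoord 𝕜 H i) ∘L pairCoord 𝕜 H i = 1 := by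
  ext v : 1
  simp only [pairCoord, Fin.sum_univ_two, Matrix.cons_val_zero, Matrix.cons_val_one, add_apply,
    comp_apply, WithLp.fstL_apply, WithLp.sndL_apply, adjoint_fstL_apply, adjoint_sndL_apply,
    ← WithLp.toLp_add, Prod.mk_add_mk, add_zero, zero_add]
  rfl

theorem comp_adjoint_pairCoord {R : WithLp 2 (H × H) →L[𝕜] H} {R₁ R₂ : H →L[𝕜] H}
    (hR : ∀ x y : H, R (WithLp.toLp 2 (x, y)) = R₁ x + R₂ y) (i : Fin 2) :
    R ∘L adjoint (pairCoord 𝕜 H i) = ![R₁, R₂] i := by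
  ext x
  fin_cases i <;> simp [pairCoord, adjoint_fstL_apply, adjoint_sndL_apply, hR]

end Coordinates

/-- The condition `hP` says that the coordinates `P i` embed `K` isometrically into `H^ι`; the
entries of a row operator `R : K → H` are then the `R ∘ (P i)*`. -/
theorem phi_of_A_is_two_contraction_general
    {𝕜 ι H K : Type*} [RCLike 𝕜] [Fintype ι]
    [NormedAddCommGroup H] [InnerProductSpace 𝕜 H] [CompleteSpace H]
    [NormedAddCommGroup K] [InnerProductSpace 𝕜 K] [CompleteSpace K]
    {P : ι → K →L[𝕜] H} (hP : ∑ i, adjoint (P i) ∘L P i = 1)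
    {a : ι → H →L[𝕜] H} (hcomm : ∀ i j, Commute (a i) (a j))
    (hcontr : ∑ i, a i * adjoint (a i) ≤ 1)
    {A : K →L[𝕜] H} (hA : ∀ i, A ∘L adjoint (P i) = a i)
    {μ : ι → 𝕜} (hμ : ∑ i, ‖μ i‖ ^ 2 < 1)
    {s : ℝ} (hs : s = √(1 - ∑ i, ‖μ i‖ ^ 2))
    {L : K →L[𝕜] H} (hL : ∀ i, L ∘L adjoint (P i) = μ i • 1)
    {D : K →L[𝕜] K} (hD : 0 ≤ D) (hDD : D * D = 1 - adjoint L ∘L L)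
    {T : H →L[𝕜] H} (hT : T * (1 - A ∘L adjoint L) = 1) (hT' : (1 - A ∘L adjoint L) * T = 1)
    {b : ι → H →L[𝕜] H} (hb : ∀ i, mobius s L A D T ∘L adjoint (P i) = b i) :
    (∀ i j, Commute (b i) (b j)) ∧ ∑ i, b i * adjoint (b i) ≤ 1 := by
  have hs0 : 0 < s := hs ▸ Real.sqrt_pos.2 (sub_pos.2 hμ)
  have hLL : L ∘L adjoint L = (1 - (s : 𝕜) ^ 2) • 1 := by
    rw [comp_adjoint_self_eq_smul_one hP hL, hs, ← RCLike.ofReal_pow,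
      Real.sq_sqrt (sub_pos.2 hμ).le, RCLike.ofReal_sub, RCLike.ofReal_one, sub_sub_cancel]
  constructor
  · have hTa (i : ι) : Commute T (a i) := by
      refine commute_of_inverse_one_sub hT hT' ?_
      rw [comp_adjoint_eq_sum_conj_smul hP hA hL]
      exact Commute.sum_left _ _ _ fun j _ ↦ (hcomm j i).smul_left _
    have hb_eq (i : ι) :
        b i = ((1 + (s : 𝕜))⁻¹ * μ i) • (1 + (s : 𝕜) • T) - (s : 𝕜) • (T * a i) := by
      rw [← hb, mobius_eq hs0 hLL hD hDD hT, sub_comp, smul_comp, smul_comp, comp_assoc,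
        comp_assoc, hL, hA, comp_smul, smul_smul]
      rfl
    intro i j
    rw [hb_eq, hb_eq]
    exact commute_smul_sub_smul (hTa i) (hTa j) (hcomm i j) _ _ _
  · simp only [mul_def] at hcontr ⊢
    rw [← comp_adjoint_eq_sum hP hb hb]
    refine mobius_comp_adjoint_le_one hs0 hLL hD hDD hT ?_
    rwa [comp_adjoint_eq_sum hP hA hA]

theorem phi_of_A_is_two_contraction
    {H : Type*} [NormedAddCommGroup H] [InnerProductSpace ℂ H] [CompleteSpace H]
    (A₁ A₂ : H →L[ℂ] H)
    (hcomm : A₁ * A₂ = A₂ * A₁)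
    (hcontr : A₁ * adjoint A₁ + A₂ * adjoint A₂ ≤ 1)
    (Arow : WithLp 2 (H × H) →L[ℂ] H)
    (hArow : ∀ x y : H, Arow ((WithLp.equiv 2 (H × H)).symm (x, y)) = A₁ x + A₂ y)
    (μ₁ μ₂ : ℂ) (hμ : ‖μ₁‖ ^ 2 + ‖μ₂‖ ^ 2 < 1) (hμ0 : (μ₁, μ₂) ≠ ((0 : ℂ), (0 : ℂ)))
    (s : ℝ) (hs : s = Real.sqrt (1 - ‖μ₁‖ ^ 2 - ‖μ₂‖ ^ 2))
    (Lrow : WithLp 2 (H × H) →L[ℂ] H)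
    (hLrow : ∀ x y : H, Lrow ((WithLp.equiv 2 (H × H)).symm (x, y)) = μ₁ • x + μ₂ • y)
    (DL : WithLp 2 (H × H) →L[ℂ] WithLp 2 (H × H)) (hDL_pos : 0 ≤ DL)
    (hDL_sq : DL * DL = 1 - (adjoint Lrow) ∘L Lrow)
    (T₁ : H →L[ℂ] H) (hT₁ : T₁ * (1 - Arow ∘L adjoint Lrow) = 1)
    (hT₁' : (1 - Arow ∘L adjoint Lrow) * T₁ = 1)
    (B₁ B₂ : H →L[ℂ] H)
    (hB : ∀ x y : H, (Lrow - (s : ℂ) • (T₁ ∘L Arow ∘L DL)) ((WithLp.equiv 2 (H × H)).symm (x, y)) = B₁ x + B₂ y) :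
    B₁ * B₂ = B₂ * B₁ ∧ B₁ * adjoint B₁ + B₂ * adjoint B₂ ≤ 1 := by
  have hΦ := phi_of_A_is_two_contraction_general sum_adjoint_pairCoord_comp
    (a := ![A₁, A₂]) (μ := ![μ₁, μ₂]) (b := ![B₁, B₂]) (s := s)
    (by simp [Fin.forall_fin_two, commute_iff_eq, hcomm])
    (by simpa [Fin.sum_univ_two] using hcontr) (comp_adjoint_pairCoord hArow)
    (by simpa [Fin.sum_univ_two] using hμ) (by simpa [Fin.sum_univ_two, sub_sub] using hs)
    (fun i ↦ by fin_cases i <;>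
      exact comp_adjoint_pairCoord (R₁ := μ₁ • 1) (R₂ := μ₂ • 1) hLrow _)
    hDL_pos hDL_sq hT₁ hT₁' (comp_adjoint_pairCoord hB)
  exact ⟨hΦ.1 0 1, by simpa [Fin.sum_univ_two] using hΦ.2⟩
end

section
/- (Formula (13), corrected with the normalizing factor.) Let A = (A₁, A₂) be a commuting 2-contraction on H, λ = (λ₁,λ₂) ∈ 𝔻², λ ≠ 0, and s = √(1 − |λ₁|² − |λ₂|²). Then the components of Φ_λ(A) are B₁(λ) = λ₁·1_H − (s/(|λ₁|² + |λ₂|²))·(1_H − λ̄₁A₁ − λ̄₂A₂)⁻¹·( A₁(|λ₂|² + |λ₁|²s) + λ₁λ̄₂A₂(s − 1) ) and B₂(λ) = λ₂·1_H − (s/(|λ₁|² + |λ₂|²))·(1_H − λ̄₁A₁ − λ̄₂A₂)⁻¹·( λ̄₁λ₂A₁(s − 1) + A₂(|λ₁|² + |λ₂|²s) ). -/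
/-!
Write `n = |λ₁|² + |λ₂|²`. Since `ΛΛ* = n`, the operator `q = n⁻¹Λ*Λ` is a projection, so
`1 - Λ*Λ = (1 - q) + s²q` has positive square root `(1 - q) + sq = 1 - ((1 - s) / n) Λ*Λ`.
Composing with `A` gives `A D_Λ = A - ((1 - s) / n) (AΛ*) Λ`, where `AΛ* = λ̄₁A₁ + λ̄₂A₂`.
-/

open ContinuousLinearMap Filter

section Defect

lemma sqrt_one_sub_smul_of_isStarProjection {R : Type*} [CStarAlgebra R] [PartialOrder R]
    [StarOrderedRing R] {q : R} (hq : IsStarProjection q) {s : ℝ} (hs : 0 ≤ s) :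
    CFC.sqrt (1 - (1 - (s : ℂ) ^ 2) • q) = 1 - (1 - (s : ℂ)) • q := by
  have hqq : q * q = q := hq.isIdempotentElem
  refine CFC.sqrt_unique ?_ ?_
  · simp only [sub_mul, mul_sub, one_mul, mul_one, smul_mul_smul_comm, hqq]
    module
  · have hsplit : 1 - (1 - (s : ℂ)) • q = (1 - q) + s • q := by
      rw [← Complex.coe_smul s q]
      module
    rw [hsplit]
    exact add_nonneg hq.one_sub_nonneg (smul_nonneg hs hq.nonneg)

variable {E F : Type*} [NormedAddCommGroup E] [InnerProductSpace ℂ E] [CompleteSpace E]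
  [NormedAddCommGroup F] [InnerProductSpace ℂ F] [CompleteSpace F]

lemma isStarProjection_inv_smul_adjoint_comp_self {L : E →L[ℂ] F} {n : ℝ} (hn : n ≠ 0)
    (hL : L ∘L adjoint L = (n : ℂ) • 1) :
    IsStarProjection ((n : ℂ)⁻¹ • (adjoint L ∘L L)) where
  isIdempotentElem := by
    have hLL (y : F) : L (adjoint L y) = (n : ℂ) • y := congr($hL y)
    ext x
    simp [-Complex.coe_smul, hLL, hn]
  isSelfAdjoint := by
    simp [isSelfAdjoint_iff, star_eq_adjoint, adjoint_comp]

lemma defect_eq_one_sub_smul_adjoint_comp_self {L : E →L[ℂ] F} {n s : ℝ} (hn : n ≠ 0)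
    (hs : 0 ≤ s) (hsn : s ^ 2 = 1 - n) (hL : L ∘L adjoint L = (n : ℂ) • 1)
    {D : E →L[ℂ] E} (hD : 0 ≤ D) (hDD : D * D = 1 - adjoint L ∘L L) :
    D = 1 - ((1 - (s : ℂ)) / n) • (adjoint L ∘L L) := by
  have hn' : (n : ℂ) ≠ 0 := Complex.ofReal_ne_zero.mpr hn
  have hsn' : 1 - (s : ℂ) ^ 2 = n := by
    rw [← Complex.ofReal_pow, hsn, Complex.ofReal_sub, Complex.ofReal_one, sub_sub_cancel]
  calc
    D = CFC.sqrt (1 - adjoint L ∘L L) := (CFC.sqrt_unique hDD hD).symm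
    _ = CFC.sqrt (1 - (1 - (s : ℂ) ^ 2) • ((n : ℂ)⁻¹ • (adjoint L ∘L L))) := by
      rw [hsn', smul_inv_smul₀ hn']
    _ = 1 - ((1 - (s : ℂ)) / n) • (adjoint L ∘L L) := by
      rw [sqrt_one_sub_smul_of_isStarProjection
        (isStarProjection_inv_smul_adjoint_comp_self hn hL) hs, smul_smul, div_eq_mul_inv]

end Defect

section Row

variable {𝕜 E₁ E₂ F G : Type*}

section Normed

variable [NormedField 𝕜] [NormedAddCommGroup E₁] [NormedSpace 𝕜 E₁]
  [NormedAddCommGroup E₂] [NormedSpace 𝕜 E₂] [NormedAddCommGroup F] [NormedSpace 𝕜 F]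
  [NormedAddCommGroup G] [NormedSpace 𝕜 G]

/-- The row operator `(x, y) ↦ A₁ x + A₂ y`, with its domain the `ℓ²` direct sum `E₁ ⊕ E₂`. -/
def row (A₁ : E₁ →L[𝕜] F) (A₂ : E₂ →L[𝕜] F) : WithLp 2 (E₁ × E₂) →L[𝕜] F :=
  A₁ ∘L WithLp.fstL 2 𝕜 E₁ E₂ + A₂ ∘L WithLp.sndL 2 𝕜 E₁ E₂

@[simp]
lemma row_apply (A₁ : E₁ →L[𝕜] F) (A₂ : E₂ →L[𝕜] F) (v : WithLp 2 (E₁ × E₂)) :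
    row A₁ A₂ v = A₁ v.fst + A₂ v.snd :=
  rfl

lemma eq_row_iff {L : WithLp 2 (E₁ × E₂) →L[𝕜] F} {A₁ : E₁ →L[𝕜] F} {A₂ : E₂ →L[𝕜] F} :
    L = row A₁ A₂ ↔ ∀ x y, L (WithLp.toLp 2 (x, y)) = A₁ x + A₂ y :=
  ⟨fun h x y => by simp [h], fun h => ContinuousLinearMap.ext fun v => h v.fst v.snd⟩

lemma row_inj {A₁ B₁ : E₁ →L[𝕜] F} {A₂ B₂ : E₂ →L[𝕜] F} :
    row A₁ A₂ = row B₁ B₂ ↔ A₁ = B₁ ∧ A₂ = B₂ := by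
  refine ⟨fun h => ⟨?_, ?_⟩, fun ⟨h₁, h₂⟩ => h₁ ▸ h₂ ▸ rfl⟩
  · ext x
    simpa using congr($h (WithLp.toLp 2 (x, 0)))
  · ext y
    simpa using congr($h (WithLp.toLp 2 (0, y)))

lemma row_sub_row (A₁ B₁ : E₁ →L[𝕜] F) (A₂ B₂ : E₂ →L[𝕜] F) :
    row A₁ A₂ - row B₁ B₂ = row (A₁ - B₁) (A₂ - B₂) := by
  ext v
  simp [add_sub_add_comm]

lemma smul_row (c : 𝕜) (A₁ : E₁ →L[𝕜] F) (A₂ : E₂ →L[𝕜] F) :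
    c • row A₁ A₂ = row (c • A₁) (c • A₂) := by
  ext v
  simp

lemma comp_row (T : F →L[𝕜] G) (A₁ : E₁ →L[𝕜] F) (A₂ : E₂ →L[𝕜] F) :
    T ∘L row A₁ A₂ = row (T ∘L A₁) (T ∘L A₂) := by
  ext v
  simp

variable (E₁) in
/-- The operator `Λ` of the paper for `λ = (a, b)`: the row operator whose entries are the scalars
`a` and `b`. -/
def scalarRow (a b : 𝕜) : WithLp 2 (E₁ × E₁) →L[𝕜] E₁ :=
  row (a • 1) (b • 1)

lemma comp_scalarRow (T : E₁ →L[𝕜] F) (a b : 𝕜) :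
    T ∘L scalarRow E₁ a b = row (a • T) (b • T) := by
  simp only [scalarRow, comp_row, comp_smul, one_def, comp_id]

end Normed

section Adjoint

variable [RCLike 𝕜] [NormedAddCommGroup E₁] [InnerProductSpace 𝕜 E₁] [CompleteSpace E₁]
  [NormedAddCommGroup E₂] [InnerProductSpace 𝕜 E₂] [CompleteSpace E₂]
  [NormedAddCommGroup F] [InnerProductSpace 𝕜 F] [CompleteSpace F]
  [NormedAddCommGroup G] [NormedSpace 𝕜 G]

lemma adjoint_row_apply_s15 (B₁ : E₁ →L[𝕜] F) (B₂ : E₂ →L[𝕜] F) (z : F) :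
    adjoint (row B₁ B₂) z = WithLp.toLp 2 (adjoint B₁ z, adjoint B₂ z) := by
  refine ext_inner_right 𝕜 fun v => ?_
  simp [adjoint_inner_left, WithLp.prod_inner_apply, inner_add_right]

lemma row_comp_adjoint_row_s15 (A₁ : E₁ →L[𝕜] G) (A₂ : E₂ →L[𝕜] G) (B₁ : E₁ →L[𝕜] F)
    (B₂ : E₂ →L[𝕜] F) :
    row A₁ A₂ ∘L adjoint (row B₁ B₂) = A₁ ∘L adjoint B₁ + A₂ ∘L adjoint B₂ := by
  ext z
  simp [adjoint_row_apply_s15]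

lemma row_comp_adjoint_scalarRow (A₁ A₂ : E₁ →L[𝕜] G) (a b : 𝕜) :
    row A₁ A₂ ∘L adjoint (scalarRow E₁ a b) = starRingEnd 𝕜 a • A₁ + starRingEnd 𝕜 b • A₂ := by
  simp only [scalarRow, row_comp_adjoint_row_s15, map_smulₛₗ, comp_smul, one_def, adjoint_id,
    comp_id]

lemma scalarRow_comp_adjoint_self (a b : 𝕜) :
    scalarRow E₁ a b ∘L adjoint (scalarRow E₁ a b) = ((‖a‖ ^ 2 + ‖b‖ ^ 2 : ℝ) : 𝕜) • 1 := by
  calc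
    _ = starRingEnd 𝕜 a • a • 1 + starRingEnd 𝕜 b • b • 1 :=
      row_comp_adjoint_scalarRow (a • 1) (b • 1) a b
    _ = _ := by
      rw [smul_smul, smul_smul, ← add_smul, RCLike.conj_mul, RCLike.conj_mul]
      push_cast
      rfl

end Adjoint

end Row

section Components

variable {H K : Type*} [NormedAddCommGroup H] [InnerProductSpace ℂ H] [CompleteSpace H]
  [NormedAddCommGroup K] [NormedSpace ℂ K]

lemma sub_smul_smul_conj_smul_add {M : Type*} [AddCommGroup M] [Module ℂ M] {a b : ℂ}
    (hn : ‖a‖ ^ 2 + ‖b‖ ^ 2 ≠ 0) (s : ℝ) (x y : M) :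
    x - ((1 - (s : ℂ)) / (‖a‖ ^ 2 + ‖b‖ ^ 2 : ℝ)) •
        a • (starRingEnd ℂ a • x + starRingEnd ℂ b • y) =
      ((‖a‖ ^ 2 + ‖b‖ ^ 2 : ℝ) : ℂ)⁻¹ •
        (((‖b‖ ^ 2 + ‖a‖ ^ 2 * s : ℝ) : ℂ) • x +
          (a * starRingEnd ℂ b * ((s : ℂ) - 1)) • y) := by
  have hn' : (‖a‖ : ℂ) ^ 2 + (‖b‖ : ℂ) ^ 2 ≠ 0 := by exact_mod_cast hn
  have ha : a * starRingEnd ℂ a = (‖a‖ : ℂ) ^ 2 := Complex.mul_conj' a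
  push_cast
  match_scalars
  · field_simp
    linear_combination (s - 1 : ℂ) * ha
  · field_simp
    ring

lemma row_comp_defect (A₁ A₂ : H →L[ℂ] K) {a b : ℂ} {s : ℝ} (hn : ‖a‖ ^ 2 + ‖b‖ ^ 2 ≠ 0)
    (hs : 0 ≤ s) (hsn : s ^ 2 = 1 - (‖a‖ ^ 2 + ‖b‖ ^ 2))
    {D : WithLp 2 (H × H) →L[ℂ] WithLp 2 (H × H)} (hD : 0 ≤ D)
    (hDD : D * D = 1 - adjoint (scalarRow H a b) ∘L scalarRow H a b) :
    row A₁ A₂ ∘L D = ((‖a‖ ^ 2 + ‖b‖ ^ 2 : ℝ) : ℂ)⁻¹ • row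
      (((‖b‖ ^ 2 + ‖a‖ ^ 2 * s : ℝ) : ℂ) • A₁ + (a * starRingEnd ℂ b * ((s : ℂ) - 1)) • A₂)
      ((starRingEnd ℂ a * b * ((s : ℂ) - 1)) • A₁ + ((‖a‖ ^ 2 + ‖b‖ ^ 2 * s : ℝ) : ℂ) • A₂) := by
  set L := scalarRow H a b
  set n : ℝ := ‖a‖ ^ 2 + ‖b‖ ^ 2
  set Q : H →L[ℂ] K := starRingEnd ℂ a • A₁ + starRingEnd ℂ b • A₂
  have hAL : row A₁ A₂ ∘L adjoint L = Q := row_comp_adjoint_scalarRow A₁ A₂ a b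
  have hfirst := sub_smul_smul_conj_smul_add hn s A₁ A₂
  have hsecond := sub_smul_smul_conj_smul_add (a := b) (b := a) (by rwa [add_comm]) s A₂ A₁
  rw [add_comm (‖b‖ ^ 2) (‖a‖ ^ 2), add_comm (starRingEnd ℂ b • A₂), mul_comm b,
    add_comm (Complex.ofReal _ • A₂)] at hsecond
  calc
    row A₁ A₂ ∘L D = row A₁ A₂ ∘L (1 - ((1 - (s : ℂ)) / n) • (adjoint L ∘L L)) := by
      rw [← defect_eq_one_sub_smul_adjoint_comp_self hn hs hsn
        (scalarRow_comp_adjoint_self a b) hD hDD]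
    _ = row A₁ A₂ - ((1 - (s : ℂ)) / n) • (Q ∘L L) := by
      rw [comp_sub, comp_smul, ← comp_assoc, hAL, one_def, comp_id]
    _ = row (A₁ - ((1 - (s : ℂ)) / n) • a • Q) (A₂ - ((1 - (s : ℂ)) / n) • b • Q) := by
      rw [comp_scalarRow, smul_row, row_sub_row]
    _ = _ := by
      rw [hfirst, hsecond, smul_row]

theorem phi_components_formula_general
    (A₁ A₂ : H →L[ℂ] K) (Arow : WithLp 2 (H × H) →L[ℂ] K)
    (hArow : ∀ x y : H, Arow ((WithLp.equiv 2 (H × H)).symm (x, y)) = A₁ x + A₂ y)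
    (μ₁ μ₂ : ℂ) (hμ : ‖μ₁‖ ^ 2 + ‖μ₂‖ ^ 2 ≤ 1) (hμ0 : (μ₁, μ₂) ≠ ((0 : ℂ), (0 : ℂ)))
    (s : ℝ) (hs : s = Real.sqrt (1 - ‖μ₁‖ ^ 2 - ‖μ₂‖ ^ 2))
    (Lrow : WithLp 2 (H × H) →L[ℂ] H)
    (hLrow : ∀ x y : H, Lrow ((WithLp.equiv 2 (H × H)).symm (x, y)) = μ₁ • x + μ₂ • y)
    (DL : WithLp 2 (H × H) →L[ℂ] WithLp 2 (H × H)) (hDL_pos : 0 ≤ DL)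
    (hDL_sq : DL * DL = 1 - (adjoint Lrow) ∘L Lrow)
    (T : K →L[ℂ] H) (B₁ B₂ : H →L[ℂ] H)
    (hB : ∀ x y : H, (Lrow - (s : ℂ) • (T ∘L Arow ∘L DL)) ((WithLp.equiv 2 (H × H)).symm (x, y)) =
      B₁ x + B₂ y)
    (n : ℂ) (hn : n = ((‖μ₁‖ ^ 2 + ‖μ₂‖ ^ 2 : ℝ) : ℂ)) :
    B₁ = μ₁ • 1 - ((s : ℂ) / n) •
        (T ∘L ((((‖μ₂‖ ^ 2 + ‖μ₁‖ ^ 2 * s : ℝ) : ℂ)) • A₁ +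
          (μ₁ * (starRingEnd ℂ μ₂) * ((s : ℂ) - 1)) • A₂)) ∧
      B₂ = μ₂ • 1 - ((s : ℂ) / n) •
        (T ∘L (((starRingEnd ℂ μ₁) * μ₂ * ((s : ℂ) - 1)) • A₁ +
          (((‖μ₁‖ ^ 2 + ‖μ₂‖ ^ 2 * s : ℝ) : ℂ)) • A₂)) := by
  obtain rfl : Arow = row A₁ A₂ := eq_row_iff.mpr hArow
  obtain rfl : Lrow = scalarRow H μ₁ μ₂ := eq_row_iff.mpr hLrow
  have hn0 : ‖μ₁‖ ^ 2 + ‖μ₂‖ ^ 2 ≠ 0 := by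
    contrapose! hμ0
    simpa [add_eq_zero_iff_of_nonneg] using hμ0
  have hs0 : 0 ≤ s := hs ▸ Real.sqrt_nonneg _
  have hsn : s ^ 2 = 1 - (‖μ₁‖ ^ 2 + ‖μ₂‖ ^ 2) := by
    rw [hs, sub_sub, Real.sq_sqrt (sub_nonneg.mpr hμ)]
  rw [← row_inj, ← eq_row_iff.mpr hB, row_comp_defect A₁ A₂ hn0 hs0 hsn hDL_pos hDL_sq, ← hn,
    comp_smul, comp_row, smul_smul, ← div_eq_mul_inv, smul_row, scalarRow, row_sub_row]

end Components

theorem phi_components_formula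
    {H : Type*} [NormedAddCommGroup H] [InnerProductSpace ℂ H] [CompleteSpace H]
    (A₁ A₂ : H →L[ℂ] H)
    (hcomm : A₁ * A₂ = A₂ * A₁)
    (hcontr : A₁ * adjoint A₁ + A₂ * adjoint A₂ ≤ 1)
    (Arow : WithLp 2 (H × H) →L[ℂ] H)
    (hArow : ∀ x y : H, Arow ((WithLp.equiv 2 (H × H)).symm (x, y)) = A₁ x + A₂ y)
    (μ₁ μ₂ : ℂ) (hμ : ‖μ₁‖ ^ 2 + ‖μ₂‖ ^ 2 < 1) (hμ0 : (μ₁, μ₂) ≠ ((0 : ℂ), (0 : ℂ)))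
    (s : ℝ) (hs : s = Real.sqrt (1 - ‖μ₁‖ ^ 2 - ‖μ₂‖ ^ 2))
    (Lrow : WithLp 2 (H × H) →L[ℂ] H)
    (hLrow : ∀ x y : H, Lrow ((WithLp.equiv 2 (H × H)).symm (x, y)) = μ₁ • x + μ₂ • y)
    (DL : WithLp 2 (H × H) →L[ℂ] WithLp 2 (H × H)) (hDL_pos : 0 ≤ DL)
    (hDL_sq : DL * DL = 1 - (adjoint Lrow) ∘L Lrow)
    (T₁ : H →L[ℂ] H) (hT₁ : T₁ * (1 - Arow ∘L adjoint Lrow) = 1)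
    (hT₁' : (1 - Arow ∘L adjoint Lrow) * T₁ = 1)
    (B₁ B₂ : H →L[ℂ] H)
    (hB : ∀ x y : H, (Lrow - (s : ℂ) • (T₁ ∘L Arow ∘L DL)) ((WithLp.equiv 2 (H × H)).symm (x, y)) = B₁ x + B₂ y)
    (n : ℂ) (hn : n = ((‖μ₁‖ ^ 2 + ‖μ₂‖ ^ 2 : ℝ) : ℂ)) :
    B₁ = μ₁ • 1 - ((s : ℂ) / n) •
        (T₁ * ((((‖μ₂‖ ^ 2 + ‖μ₁‖ ^ 2 * s : ℝ) : ℂ)) • A₁ +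
          (μ₁ * (starRingEnd ℂ μ₂) * ((s : ℂ) - 1)) • A₂)) ∧
      B₂ = μ₂ • 1 - ((s : ℂ) / n) •
        (T₁ * (((starRingEnd ℂ μ₁) * μ₂ * ((s : ℂ) - 1)) • A₁ +
          (((‖μ₁‖ ^ 2 + ‖μ₂‖ ^ 2 * s : ℝ) : ℂ)) • A₂)) := by
  exact phi_components_formula_general A₁ A₂ Arow hArow μ₁ μ₂ hμ.le hμ0 s hs Lrow hLrow DL hDL_pos
    hDL_sq T₁ B₁ B₂ hB n hn
end
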